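/- arXiv:2601.15258 — 2 statements merged into one kernel-verified Lean document; each statement's English description precedes it below -/
import Mathlib

section
/- In the sum-variant with k = 2 facilities, there exists a strategyproof two-phase mechanism whose approximation ratio is at most 1 + √2; that is, on every instance its output has social cost at most (1+√2) times the minimum social cost over all feasible solutions. -/
open Finset

noncomputable section

/-- A distributed facility location setting for `k` facilities and `m` groups:
`n ≥ 2` agents on the real line, partitioned into `m ≥ k` disjoint nonempty groups. -/
structure FLSetting (k m : ℕ) where
  n : ℕ
  hn : 2 ≤ n
  hmk : k ≤ m
  grp : Fin n → Fin m
  surj : Function.Surjective grp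

/-- A two-phase mechanism for `k` facilities: for each number `m` of groups, a
representative function on finite multisets of reals, and a selection function
producing the `k` facility locations from the multiset of representatives. -/
structure TwoPhase (k : ℕ) where
  rep : ℕ → Multiset ℝ → ℝ
  sel : ℕ → Multiset ℝ → Fin k → ℝ

/-- Validity of a two-phase mechanism: the representative of a nonempty multiset
is one of its elements, and the selected facility locations form a sub-multiset
of the representatives. -/
def TwoPhase.Valid {k : ℕ} (M : TwoPhase k) : Prop :=
  (∀ (m : ℕ) (S : Multiset ℝ), S ≠ 0 → M.rep m S ∈ S) ∧
  (∀ (m : ℕ) (R : Multiset ℝ), Multiset.card R = m → k ≤ m →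
    (↑(List.ofFn (M.sel m R)) : Multiset ℝ) ≤ R)

/-- The multiset of (reported) positions of the agents in group `j`. -/
def groupMS {k m : ℕ} (S : FLSetting k m) (x : Fin S.n → ℝ) (j : Fin m) : Multiset ℝ :=
  (Finset.univ.filter (fun i => S.grp i = j)).val.map x

/-- The number of agents in group `j`. -/
def groupSize {k m : ℕ} (S : FLSetting k m) (j : Fin m) : ℕ :=
  (Finset.univ.filter (fun i => S.grp i = j)).card

/-- The multiset of the `m` group representatives. -/
def repsMS {k m : ℕ} (M : TwoPhase k) (S : FLSetting k m) (x : Fin S.n → ℝ) : Multiset ℝ :=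
  (Finset.univ.val.map fun j : Fin m => M.rep m (groupMS S x j))

/-- The facility locations output by mechanism `M` on reported positions `x`. -/
def outcome {k m : ℕ} (M : TwoPhase k) (S : FLSetting k m) (x : Fin S.n → ℝ) : Fin k → ℝ :=
  M.sel m (repsMS M S x)

/-- Sum-variant individual cost: total distance to all facilities. -/
def sumCost (k : ℕ) (xi : ℝ) (y : Fin k → ℝ) : ℝ := ∑ ℓ, |xi - y ℓ|

/-- Max-variant individual cost: distance to the farthest facility. -/
def maxCost (k : ℕ) (xi : ℝ) (y : Fin k → ℝ) : ℝ := ⨆ ℓ, |xi - y ℓ|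

/-- Social cost: average over groups of the average individual cost within the group. -/
def SC {k m : ℕ} (cost : ℝ → (Fin k → ℝ) → ℝ) (S : FLSetting k m) (x : Fin S.n → ℝ)
    (y : Fin k → ℝ) : ℝ :=
  (1 / (m : ℝ)) * ∑ j : Fin m,
    (1 / (groupSize S j : ℝ)) *
      ∑ i ∈ Finset.univ.filter (fun i => S.grp i = j), cost (x i) y

/-- A feasible solution opens the `k` facilities at the positions of `k` distinct agents. -/
def Feasible {k m : ℕ} (S : FLSetting k m) (x : Fin S.n → ℝ) (y : Fin k → ℝ) : Prop :=
  ∃ f : Fin k → Fin S.n, Function.Injective f ∧ ∀ ℓ, y ℓ = x (f ℓ)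

/-- Strategyproofness with respect to an individual cost function. -/
def Strategyproof {k : ℕ} (cost : ℝ → (Fin k → ℝ) → ℝ) (M : TwoPhase k) : Prop :=
  ∀ (m : ℕ) (S : FLSetting k m) (x : Fin S.n → ℝ) (i : Fin S.n) (x' : ℝ),
    cost (x i) (outcome M S x) ≤ cost (x i) (outcome M S (Function.update x i x'))

/-- Strategyproofness restricted to instances with exactly `m` groups. -/
def StrategyproofOn {k : ℕ} (cost : ℝ → (Fin k → ℝ) → ℝ) (M : TwoPhase k) (m : ℕ) : Prop :=
  ∀ (S : FLSetting k m) (x : Fin S.n → ℝ) (i : Fin S.n) (x' : ℝ),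
    cost (x i) (outcome M S x) ≤ cost (x i) (outcome M S (Function.update x i x'))

/-- The `t`-th leftmost element of a multiset of reals (1-indexed). -/
def kthLeftmost (S : Multiset ℝ) (t : ℕ) : ℝ := (S.sort (· ≤ ·)).getD (t - 1) 0

/-- The mechanism `M_m(θ, ℓ, r)` for two facilities: each group's representative is the
position of its `⌈θ·n_g⌉`-th leftmost agent, and the facilities are opened at the
`⌈ℓm⌉`-th and `⌈rm⌉`-th leftmost representative locations. -/
def Mmech (θ l r : ℝ) : TwoPhase 2 where
  rep := fun _ S => kthLeftmost S ⌈θ * (Multiset.card S : ℝ)⌉₊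
  sel := fun m R => ![kthLeftmost R ⌈l * (m : ℝ)⌉₊, kthLeftmost R ⌈r * (m : ℝ)⌉₊]


/-!
Let the representative of a group be its `θ`-quantile, and open the two facilities at fixed ranks
among the representatives.

*Strategyproofness.* If every entry of a family of reals moves towards a point `c`, then so does
each order statistic. Compared with a misreport by an agent at `c`, the truthful report moves every
entry towards `c`, hence so does it every representative and every facility.

*Approximation.* Give agents weights summing to `1` and let `C z` be the weighted distance to `z`;
the social cost of `y` is `∑ ℓ, C (y ℓ)`, so for the output `a ≤ b` it suffices to bound
`C a + C b` by `2 (1 + √2) C o` for every single point `o`. Let `P` be the weight of the agents in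
`[a, ∞)` and `Q` that of the agents in `[b, ∞)`. If `o ≤ a`, moving from `o` to `a` and on to `b`
gives `C a + C b ≤ 2 C o + 2 (1 - 2 P) (a - o) + (1 - 2 Q) (b - a)`, while
`P (a - o) + Q (b - a) ≤ C o`. For `P ≥ (2 - √2) / 2` and `Q ≥ (√2 - 1) / 2` the two excess terms
add up to at most `2 √2 C o`. The case `b ≤ o` is the mirror image, and the case `a ≤ o ≤ b` needs
only weight `(√2 - 1) / 2` beyond each of the facilities.
-/

section OrderStatistics

theorem getElem_iff_lt_countP_of_antitone {α : Type*} [Preorder α] {l : List α}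
    (hl : l.Pairwise (· ≤ ·)) {p : α → Prop} [DecidablePred p] (hp : Antitone p) {i : ℕ}
    (hi : i < l.length) : p l[i] ↔ i < l.countP (p ·) := by
  induction l generalizing i with
  | nil => simp at hi
  | cons a l ih =>
    rw [List.pairwise_cons] at hl
    by_cases ha : p a
    · cases i with
      | zero => simp [ha]
      | succ i => simp [ha, ih hl.2 (Nat.lt_of_succ_lt_succ hi)]
    · have hnot : ∀ b ∈ a :: l, ¬p b := by
        simpa [ha] using fun b hb h => ha (hp (hl.1 b hb) h)
      have hcount : (a :: l).countP (p ·) = 0 := List.countP_eq_zero.2 (by simpa using hnot)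
      simp [hcount, hnot _ (List.getElem_mem hi)]

variable {S : Multiset ℝ} {t : ℕ}

theorem kthLeftmost_eq_getElem (ht : t ∈ Icc 1 S.card) :
    kthLeftmost S t =
      (S.sort (· ≤ ·))[t - 1]'(by rw [Multiset.length_sort]; grind) :=
  List.getD_eq_getElem ..

theorem kthLeftmost_mem (ht : t ∈ Icc 1 S.card) : kthLeftmost S t ∈ S := by
  rw [kthLeftmost_eq_getElem ht, ← Multiset.mem_sort (r := (· ≤ ·))]
  exact List.getElem_mem _

theorem kthLeftmost_iff_le_countP (ht : t ∈ Icc 1 S.card) {p : ℝ → Prop} [DecidablePred p]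
    (hp : Antitone p) : p (kthLeftmost S t) ↔ t ≤ S.countP p := by
  have hcount : S.countP p = (S.sort (· ≤ ·)).countP (p ·) := by
    conv_lhs => rw [← Multiset.sort_eq S (· ≤ ·), Multiset.coe_countP]
  rw [kthLeftmost_eq_getElem ht,
    getElem_iff_lt_countP_of_antitone (Multiset.pairwise_sort S _) hp, hcount]
  grind

theorem kthLeftmost_le_iff (ht : t ∈ Icc 1 S.card) {z : ℝ} :
    kthLeftmost S t ≤ z ↔ t ≤ S.countP (· ≤ z) :=
  kthLeftmost_iff_le_countP ht antitone_le

theorem le_kthLeftmost_iff (ht : t ∈ Icc 1 S.card) {z : ℝ} :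
    z ≤ kthLeftmost S t ↔ S.card + 1 ≤ S.countP (z ≤ ·) + t := by
  have hlt : kthLeftmost S t < z ↔ t ≤ S.countP (· < z) :=
    kthLeftmost_iff_le_countP ht antitone_lt
  have hcard := Multiset.card_eq_countP_add_countP (z ≤ ·) S
  simp only [not_le] at hcard
  rw [← not_lt, hlt]
  omega

theorem kthLeftmost_mono {s : ℕ} (hs : s ∈ Icc 1 S.card) (ht : t ∈ Icc 1 S.card)
    (hst : s ≤ t) : kthLeftmost S s ≤ kthLeftmost S t :=
  (kthLeftmost_le_iff hs).2 (hst.trans ((kthLeftmost_le_iff ht).1 le_rfl))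

theorem ofFn_kthLeftmost_le {k : ℕ} {t : Fin k → ℕ} (ht : StrictMono t)
    (htS : ∀ ℓ, t ℓ ∈ Icc 1 S.card) :
    (↑(List.ofFn fun ℓ => kthLeftmost S (t ℓ)) : Multiset ℝ) ≤ S := by
  let index (ℓ : Fin k) : Fin (S.sort (· ≤ ·)).length :=
    ⟨t ℓ - 1, by rw [Multiset.length_sort]; grind⟩
  have hindex : (List.ofFn index).Pairwise (· < ·) :=
    List.pairwise_ofFn.2 fun i j hij => by
      have := ht hij
      simp only [index, Fin.mk_lt_mk]
      grind
  have hsub := (List.map_getElem_sublist hindex).subperm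
  rw [← Multiset.coe_le, Multiset.sort_eq, List.map_ofFn] at hsub
  simp only [kthLeftmost_eq_getElem (htS _)]
  exact hsub

variable {ι : Type*} {s : Multiset ι} {f g : ι → ℝ}

theorem kthLeftmost_map_imp (ht : t ∈ Icc 1 s.card) {p : ℝ → Prop} (hp : Antitone p)
    (hfg : ∀ j, p (f j) → p (g j)) (hf : p (kthLeftmost (s.map f) t)) :
    p (kthLeftmost (s.map g) t) := by
  classical
  rw [kthLeftmost_iff_le_countP (by simpa using ht) hp, Multiset.countP_map] at hf ⊢
  exact hf.trans (Multiset.card_le_card (Multiset.monotone_filter_right s hfg))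

theorem kthLeftmost_map_mem_uIcc (ht : t ∈ Icc 1 s.card) {c : ℝ}
    (hfg : ∀ j, f j ∈ Set.uIcc c (g j)) :
    kthLeftmost (s.map f) t ∈ Set.uIcc c (kthLeftmost (s.map g) t) := by
  simp only [Set.mem_uIcc] at hfg
  rcases lt_trichotomy c (kthLeftmost (s.map f) t) with hc | hc | hc
  · refine Set.mem_uIcc.2 (Or.inl ⟨hc.le, ?_⟩)
    by_contra! hlt
    refine lt_irrefl _ (kthLeftmost_map_imp (p := (· < _)) ht antitone_lt (fun j hj => ?_) hlt)
    rcases hfg j with h | h <;> linarith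
  · exact hc ▸ Set.left_mem_uIcc
  · refine Set.mem_uIcc.2 (Or.inr ⟨?_, hc.le⟩)
    refine kthLeftmost_map_imp (p := (· ≤ _)) ht antitone_le (fun j hj => ?_) le_rfl
    rcases hfg j with h | h <;> linarith

end OrderStatistics

section WeightedDist

variable {ι : Type*} [Fintype ι]

/-- The weighted sum of the distances from points `x i` of weight `w i` to a single facility
at `z`. -/
def weightedDist (w x : ι → ℝ) (z : ℝ) : ℝ := ∑ i, w i * |x i - z|

variable {w x : ι → ℝ} {a b o : ℝ}

theorem weightedDist_neg (w x : ι → ℝ) (z : ℝ) :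
    weightedDist w (-x) (-z) = weightedDist w x z :=
  sum_congr rfl fun i _ => by rw [Pi.neg_apply, neg_sub_neg, abs_sub_comm]

theorem weightedDist_le_of_le (hw : ∀ i, 0 ≤ w i) (hoa : o ≤ a) :
    weightedDist w x a ≤
      weightedDist w x o + (∑ i, w i - 2 * ∑ i with a ≤ x i, w i) * (a - o) := by
  have hpoint : ∀ i, |x i - a| ≤ |x i - o| + (1 - 2 * if a ≤ x i then 1 else 0) * (a - o) := by
    intro i
    split_ifs with h
    · rw [abs_of_nonneg (sub_nonneg.2 h), abs_of_nonneg (sub_nonneg.2 (hoa.trans h))]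
      linarith
    · have := abs_sub_le (x i) o a
      rw [abs_sub_comm o a, abs_of_nonneg (sub_nonneg.2 hoa)] at this
      linarith
  calc weightedDist w x a
      ≤ ∑ i, w i * (|x i - o| + (1 - 2 * if a ≤ x i then 1 else 0) * (a - o)) :=
        sum_le_sum fun i _ => mul_le_mul_of_nonneg_left (hpoint i) (hw i)
    _ = _ := by
        simp only [weightedDist, sum_filter, mul_sum, ← sum_sub_distrib, sum_mul,
          ← sum_add_distrib]
        exact sum_congr rfl fun i _ => by split_ifs <;> ring

theorem weightedDist_le_of_ge (hw : ∀ i, 0 ≤ w i) (hao : a ≤ o) :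
    weightedDist w x a ≤
      weightedDist w x o + (∑ i, w i - 2 * ∑ i with x i ≤ a, w i) * (o - a) := by
  simpa [weightedDist_neg, add_comm (-a), ← sub_eq_add_neg, neg_add_eq_sub] using
    weightedDist_le_of_le (x := -x) hw (neg_le_neg hao)

theorem right_mass_add_right_mass_le_weightedDist (hw : ∀ i, 0 ≤ w i) (a b o : ℝ) :
    (∑ i with a ≤ x i, w i) * (a - o) + (∑ i with b ≤ x i, w i) * (b - a) ≤
      weightedDist w x o := by
  rw [sum_filter, sum_filter, sum_mul, sum_mul, ← sum_add_distrib]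
  refine sum_le_sum fun i _ => ?_
  calc _ = w i * ((if a ≤ x i then a - o else 0) + if b ≤ x i then b - a else 0) := by
        split_ifs <;> ring
    _ ≤ w i * |x i - o| := mul_le_mul_of_nonneg_left ?_ (hw i)
  have hle := le_abs_self (x i - o)
  have hnonneg := abs_nonneg (x i - o)
  split_ifs <;> linarith

theorem left_mass_add_right_mass_le_weightedDist (hw : ∀ i, 0 ≤ w i) (a b o : ℝ) :
    (∑ i with x i ≤ a, w i) * (o - a) + (∑ i with b ≤ x i, w i) * (b - o) ≤
      weightedDist w x o := by
  rw [sum_filter, sum_filter, sum_mul, sum_mul, ← sum_add_distrib]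
  refine sum_le_sum fun i _ => ?_
  calc _ = w i * ((if x i ≤ a then o - a else 0) + if b ≤ x i then b - o else 0) := by
        split_ifs <;> ring
    _ ≤ w i * |x i - o| := mul_le_mul_of_nonneg_left ?_ (hw i)
  have hle := le_abs_self (x i - o)
  have hneg := neg_le_abs (x i - o)
  split_ifs <;> linarith

variable {κ α β : ℝ}

theorem weightedDist_add_le_of_le (hw : ∀ i, 0 ≤ w i) (hw1 : ∑ i, w i = 1) (hκ : 0 ≤ κ)
    (hα : 1 - 2 * α ≤ 2 * κ * α) (hβ : 1 - 2 * β ≤ κ * β)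
    (ha : β ≤ ∑ i with a ≤ x i, w i) (hb : α ≤ ∑ i with b ≤ x i, w i)
    (hoa : o ≤ a) (hab : a ≤ b) :
    weightedDist w x a + weightedDist w x b ≤ 2 * (1 + κ) * weightedDist w x o := by
  have hCa := weightedDist_le_of_le (x := x) hw hoa
  have hCb := weightedDist_le_of_le (x := x) hw hab
  have hCo := right_mass_add_right_mass_le_weightedDist (x := x) hw a b o
  rw [hw1] at hCa hCb
  generalize ∑ i with a ≤ x i, w i = P at *
  generalize ∑ i with b ≤ x i, w i = Q at *
  have hP : (1 - 2 * P) * (a - o) ≤ κ * P * (a - o) :=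
    mul_le_mul_of_nonneg_right (by nlinarith) (sub_nonneg.2 hoa)
  have hQ : (1 - 2 * Q) * (b - a) ≤ 2 * κ * Q * (b - a) :=
    mul_le_mul_of_nonneg_right (by nlinarith) (sub_nonneg.2 hab)
  calc weightedDist w x a + weightedDist w x b
      ≤ 2 * weightedDist w x o + 2 * ((1 - 2 * P) * (a - o)) + (1 - 2 * Q) * (b - a) := by
        linarith
    _ ≤ 2 * weightedDist w x o + 2 * (κ * P * (a - o)) + 2 * κ * Q * (b - a) := by linarith
    _ = 2 * weightedDist w x o + 2 * κ * (P * (a - o) + Q * (b - a)) := by ring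
    _ ≤ 2 * weightedDist w x o + 2 * κ * weightedDist w x o := by gcongr
    _ = 2 * (1 + κ) * weightedDist w x o := by ring

theorem weightedDist_add_le_of_mem_Icc (hw : ∀ i, 0 ≤ w i) (hw1 : ∑ i, w i = 1) (hκ : 0 ≤ κ)
    (hα : 1 - 2 * α ≤ 2 * κ * α)
    (ha : α ≤ ∑ i with x i ≤ a, w i) (hb : α ≤ ∑ i with b ≤ x i, w i)
    (hao : a ≤ o) (hob : o ≤ b) :
    weightedDist w x a + weightedDist w x b ≤ 2 * (1 + κ) * weightedDist w x o := by
  have hCa := weightedDist_le_of_ge (x := x) hw hao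
  have hCb := weightedDist_le_of_le (x := x) hw hob
  have hCo := left_mass_add_right_mass_le_weightedDist (x := x) hw a b o
  rw [hw1] at hCa hCb
  generalize ∑ i with x i ≤ a, w i = P at *
  generalize ∑ i with b ≤ x i, w i = Q at *
  have hP : (1 - 2 * P) * (o - a) ≤ 2 * κ * P * (o - a) :=
    mul_le_mul_of_nonneg_right (by nlinarith) (sub_nonneg.2 hao)
  have hQ : (1 - 2 * Q) * (b - o) ≤ 2 * κ * Q * (b - o) :=
    mul_le_mul_of_nonneg_right (by nlinarith) (sub_nonneg.2 hob)
  calc weightedDist w x a + weightedDist w x b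
      ≤ 2 * weightedDist w x o + (1 - 2 * P) * (o - a) + (1 - 2 * Q) * (b - o) := by
        linarith
    _ ≤ 2 * weightedDist w x o + 2 * κ * P * (o - a) + 2 * κ * Q * (b - o) := by linarith
    _ = 2 * weightedDist w x o + 2 * κ * (P * (o - a) + Q * (b - o)) := by ring
    _ ≤ 2 * weightedDist w x o + 2 * κ * weightedDist w x o := by gcongr
    _ = 2 * (1 + κ) * weightedDist w x o := by ring

theorem weightedDist_add_le (hw : ∀ i, 0 ≤ w i) (hw1 : ∑ i, w i = 1) (hκ : 0 ≤ κ)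
    (hα : 1 - 2 * α ≤ 2 * κ * α) (hβ : 1 - 2 * β ≤ κ * β) (hab : a ≤ b)
    (hαa : α ≤ ∑ i with x i ≤ a, w i) (hβa : β ≤ ∑ i with a ≤ x i, w i)
    (hβb : β ≤ ∑ i with x i ≤ b, w i) (hαb : α ≤ ∑ i with b ≤ x i, w i) (o : ℝ) :
    weightedDist w x a + weightedDist w x b ≤ 2 * (1 + κ) * weightedDist w x o := by
  rcases le_total o a with hoa | hao
  · exact weightedDist_add_le_of_le hw hw1 hκ hα hβ hβa hαb hoa hab
  rcases le_total o b with hob | hbo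
  · exact weightedDist_add_le_of_mem_Icc hw hw1 hκ hα hαa hαb hao hob
  · rw [add_comm, ← weightedDist_neg w x, ← weightedDist_neg w x, ← weightedDist_neg w x]
    exact weightedDist_add_le_of_le hw hw1 hκ hα hβ (by simpa using hβb) (by simpa using hαa)
      (neg_le_neg hbo) (neg_le_neg hab)

end WeightedDist

section AgentWeight

variable {k m : ℕ} (S : FLSetting k m)

theorem card_groupMS (x : Fin S.n → ℝ) (j : Fin m) : (groupMS S x j).card = groupSize S j :=
  Multiset.card_map ..

theorem groupSize_pos (j : Fin m) : 0 < groupSize S j := by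
  obtain ⟨i, hi⟩ := S.surj j
  exact card_pos.2 ⟨i, by simpa using hi⟩

theorem numGroups_pos (S : FLSetting k m) : 0 < m :=
  (S.grp ⟨0, by have := S.hn; omega⟩).pos

/-- The weight with which agent `i` contributes to the social cost. -/
def agentWeight (i : Fin S.n) : ℝ := 1 / m * (1 / groupSize S (S.grp i))

theorem agentWeight_nonneg (i : Fin S.n) : 0 ≤ agentWeight S i := by
  unfold agentWeight
  positivity

theorem sum_agentWeight_mul (h : Fin S.n → ℝ) :
    ∑ i, agentWeight S i * h i =
      1 / m * ∑ j, 1 / groupSize S j * ∑ i with S.grp i = j, h i := by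
  rw [← sum_fiberwise univ S.grp, mul_sum]
  refine sum_congr rfl fun j _ => ?_
  rw [mul_sum, mul_sum]
  refine sum_congr rfl fun i hi => ?_
  rw [agentWeight, (mem_filter.1 hi).2, mul_assoc]

theorem SC_sumCost_eq_sum_weightedDist (x : Fin S.n → ℝ) (y : Fin k → ℝ) :
    SC (sumCost k) S x y = ∑ ℓ, weightedDist (agentWeight S) x (y ℓ) := by
  rw [SC, ← sum_agentWeight_mul]
  simp only [sumCost, weightedDist, mul_sum]
  exact sum_comm

theorem sum_agentWeight_filter (x : Fin S.n → ℝ) (p : ℝ → Prop) [DecidablePred p] :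
    ∑ i with p (x i), agentWeight S i =
      1 / m * ∑ j, 1 / groupSize S j * ((groupMS S x j).countP p : ℝ) := by
  have hcount : ∀ j, ∑ i with S.grp i = j, (if p (x i) then (1 : ℝ) else 0) =
      (groupMS S x j).countP p := by
    intro j
    rw [groupMS, Multiset.countP_map, sum_boole]
    rfl
  simp_rw [← hcount, ← sum_agentWeight_mul, mul_ite, mul_one, mul_zero, sum_filter]

theorem sum_agentWeight : ∑ i, agentWeight S i = 1 := by
  have hm : (m : ℝ) ≠ 0 := by exact_mod_cast (numGroups_pos S).ne'
  have hgroup : ∀ j, (1 : ℝ) / groupSize S j * groupSize S j = 1 := fun j =>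
    one_div_mul_cancel (by exact_mod_cast (groupSize_pos S j).ne')
  simpa [card_groupMS, hgroup, hm, -one_div] using sum_agentWeight_filter S 0 fun _ => True

theorem mul_countP_div_le_sum_agentWeight (x : Fin S.n → ℝ) (r : Fin m → ℝ) (p : ℝ → Prop)
    [DecidablePred p] {u : ℝ}
    (hu : ∀ j, p (r j) → u * groupSize S j ≤ (groupMS S x j).countP p) :
    u * ((univ.val.map r).countP p : ℝ) / m ≤ ∑ i with p (x i), agentWeight S i := by
  have hgroup : ∀ j, (if p (r j) then u else 0) ≤
      1 / groupSize S j * ((groupMS S x j).countP p : ℝ) := by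
    intro j
    split_ifs with hj
    · rw [one_div, ← div_eq_inv_mul, le_div_iff₀ (by exact_mod_cast groupSize_pos S j)]
      exact hu j hj
    · positivity
  have hcount : u * ((univ.val.map r).countP p : ℝ) = ∑ j, if p (r j) then u else 0 := by
    rw [Multiset.countP_map, ← sum_filter, sum_const, nsmul_eq_mul, mul_comm]
    rfl
  rw [sum_agentWeight_filter, hcount, div_eq_inv_mul, one_div]
  gcongr with j
  exact hgroup j

end AgentWeight

section QuantileMech

variable {k : ℕ}

/-- The two-phase mechanism that represents each of `m` groups by its agent of rank
`⌈θ m * n_g⌉` and opens facility `ℓ` at the representative of rank `t m ℓ`. The mechanism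
`Mmech` only allows ranks `⌈l * m⌉` and `⌈r * m⌉` with `l` and `r` independent of `m`. -/
def quantileMech (θ : ℕ → ℝ) (t : ℕ → Fin k → ℕ) : TwoPhase k where
  rep m S := kthLeftmost S ⌈θ m * S.card⌉₊
  sel m R ℓ := kthLeftmost R (t m ℓ)

theorem ceil_mul_mem_Icc {c : ℝ} (hc : c ∈ Set.Ioc 0 1) {n : ℕ} (hn : 0 < n) :
    ⌈c * n⌉₊ ∈ Icc 1 n :=
  mem_Icc.2 ⟨Nat.one_le_ceil_iff.2 (mul_pos hc.1 (Nat.cast_pos.2 hn)),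
    Nat.ceil_le.2 (mul_le_of_le_one_left n.cast_nonneg hc.2)⟩

theorem ceil_mul_card_groupMS_mem_Icc {m : ℕ} {c : ℝ} (hc : c ∈ Set.Ioc 0 1) (S : FLSetting k m)
    (x : Fin S.n → ℝ) (j : Fin m) :
    ⌈c * (groupMS S x j).card⌉₊ ∈ Icc 1 (groupMS S x j).card :=
  ceil_mul_mem_Icc hc (card_groupMS S x j ▸ groupSize_pos S j)

variable {θ : ℕ → ℝ} {t : ℕ → Fin k → ℕ}

theorem quantileMech_valid (hθ : ∀ m, θ m ∈ Set.Ioc 0 1)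
    (ht : ∀ m, k ≤ m → StrictMono (t m)) (htm : ∀ m, k ≤ m → ∀ ℓ, t m ℓ ∈ Icc 1 m) :
    (quantileMech θ t).Valid := by
  refine ⟨fun m S hS => kthLeftmost_mem (ceil_mul_mem_Icc (hθ m) (Multiset.card_pos.2 hS)), ?_⟩
  rintro m R rfl hm
  exact ofFn_kthLeftmost_le (ht _ hm) (htm _ hm)

theorem quantileMech_strategyproof (hθ : ∀ m, θ m ∈ Set.Ioc 0 1)
    (htm : ∀ m, k ≤ m → ∀ ℓ, t m ℓ ∈ Icc 1 m) :
    Strategyproof (sumCost k) (quantileMech θ t) := by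
  intro m S x i x'
  have hagent : ∀ a, x a ∈ Set.uIcc (x i) (Function.update x i x' a) := by
    intro a
    rcases eq_or_ne a i with rfl | ha
    · exact Set.left_mem_uIcc
    · rw [Function.update_of_ne ha]
      exact Set.right_mem_uIcc
  have hrep : ∀ j, (quantileMech θ t).rep m (groupMS S x j) ∈
      Set.uIcc (x i) ((quantileMech θ t).rep m (groupMS S (Function.update x i x') j)) := by
    intro j
    have hrank := ceil_mul_card_groupMS_mem_Icc (hθ m) S x j
    simp only [quantileMech, card_groupMS] at hrank ⊢
    exact kthLeftmost_map_mem_uIcc hrank hagent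
  have hout : ∀ ℓ, outcome (quantileMech θ t) S x ℓ ∈
      Set.uIcc (x i) (outcome (quantileMech θ t) S (Function.update x i x') ℓ) := fun ℓ =>
    kthLeftmost_map_mem_uIcc (by simpa using htm m S.hmk ℓ) hrep
  refine sum_le_sum fun ℓ _ => ?_
  rw [abs_sub_comm, abs_sub_comm (x i)]
  exact Set.abs_sub_left_of_mem_uIcc (hout ℓ)

variable {m : ℕ}

theorem le_sum_agentWeight_le_outcome (hθ : θ m ∈ Set.Ioc 0 1) (S : FLSetting k m)
    (x : Fin S.n → ℝ) {ℓ : Fin k} (hℓ : t m ℓ ∈ Icc 1 m) :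
    θ m * t m ℓ / m ≤
      ∑ i with x i ≤ outcome (quantileMech θ t) S x ℓ, agentWeight S i := by
  set z := outcome (quantileMech θ t) S x ℓ
  have hreps : t m ℓ ≤ (repsMS (quantileMech θ t) S x).countP (· ≤ z) :=
    (kthLeftmost_le_iff (by simpa [repsMS] using hℓ)).1 le_rfl
  have hgroup : ∀ j, (quantileMech θ t).rep m (groupMS S x j) ≤ z →
      θ m * groupSize S j ≤ (groupMS S x j).countP (· ≤ z) := by
    intro j hj
    have hrank := (kthLeftmost_le_iff (ceil_mul_card_groupMS_mem_Icc hθ S x j)).1 hj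
    rw [card_groupMS] at hrank
    exact (Nat.le_ceil _).trans (by exact_mod_cast hrank)
  refine le_trans ?_ (mul_countP_div_le_sum_agentWeight S x _ (· ≤ z) hgroup)
  have := hθ.1.le
  gcongr
  exact hreps

theorem le_sum_agentWeight_outcome_le (hθ : θ m ∈ Set.Ioc 0 1) (S : FLSetting k m)
    (x : Fin S.n → ℝ) {ℓ : Fin k} (hℓ : t m ℓ ∈ Icc 1 m) :
    (1 - θ m) * (m + 1 - t m ℓ) / m ≤
      ∑ i with outcome (quantileMech θ t) S x ℓ ≤ x i, agentWeight S i := by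
  set z := outcome (quantileMech θ t) S x ℓ with hz
  have hreps : (m + 1 : ℝ) ≤ (repsMS (quantileMech θ t) S x).countP (z ≤ ·) + t m ℓ := by
    have hcard : (repsMS (quantileMech θ t) S x).card = m := by simp [repsMS]
    have hrank := (le_kthLeftmost_iff (hcard.symm ▸ hℓ)).1 hz.le
    rw [hcard] at hrank
    exact_mod_cast hrank
  have hgroup : ∀ j, z ≤ (quantileMech θ t).rep m (groupMS S x j) →
      (1 - θ m) * groupSize S j ≤ (groupMS S x j).countP (z ≤ ·) := by
    intro j hj
    have hrank := (le_kthLeftmost_iff (ceil_mul_card_groupMS_mem_Icc hθ S x j)).1 hj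
    rw [card_groupMS] at hrank
    have hceil := Nat.ceil_lt_add_one (mul_nonneg hθ.1.le (groupSize S j).cast_nonneg)
    have : (groupSize S j + 1 : ℝ) ≤
        (groupMS S x j).countP (z ≤ ·) + ⌈θ m * groupSize S j⌉₊ := by exact_mod_cast hrank
    linarith
  refine le_trans ?_ (mul_countP_div_le_sum_agentWeight S x _ (z ≤ ·) hgroup)
  have := sub_nonneg.2 hθ.2
  gcongr
  exact sub_le_iff_le_add.2 hreps

end QuantileMech

section Ratio

/-- The condition on a quantile `θ` and two ranks `t 0`, `t 1` among `m` groups which ensures that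
enough weight lies on either side of each facility for ratio `1 + √2`. Facility `ℓ` has at least
weight `θ * t ℓ / m` weakly to its left and `(1 - θ) * (m + 1 - t ℓ) / m` weakly to its right. -/
structure IsBalanced (m : ℕ) (θ : ℝ) (t : Fin 2 → ℕ) : Prop where
  left_fst : (√2 - 1) / 2 ≤ θ * t 0 / m
  right_fst : (2 - √2) / 2 ≤ (1 - θ) * (m + 1 - t 0) / m
  left_snd : (2 - √2) / 2 ≤ θ * t 1 / m
  right_snd : (√2 - 1) / 2 ≤ (1 - θ) * (m + 1 - t 1) / m

theorem SC_outcome_quantileMech_le {θ : ℕ → ℝ} {t : ℕ → Fin 2 → ℕ} {m : ℕ}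
    (hθ : θ m ∈ Set.Ioc 0 1) (ht : Monotone (t m)) (htm : ∀ ℓ, t m ℓ ∈ Icc 1 m)
    (h : IsBalanced m (θ m) (t m)) (S : FLSetting 2 m) (x : Fin S.n → ℝ) (y : Fin 2 → ℝ) :
    SC (sumCost 2) S x (outcome (quantileMech θ t) S x) ≤
      (1 + √2) * SC (sumCost 2) S x y := by
  have hsq : √2 * √2 = 2 := Real.mul_self_sqrt (by norm_num)
  have hle : outcome (quantileMech θ t) S x 0 ≤ outcome (quantileMech θ t) S x 1 :=
    kthLeftmost_mono (by simpa [repsMS] using htm 0) (by simpa [repsMS] using htm 1)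
      (ht (Fin.zero_le 1))
  have hratio := weightedDist_add_le (x := x) (agentWeight_nonneg S) (sum_agentWeight S)
    (Real.sqrt_nonneg 2) (by linarith) (by linarith) hle
    (h.left_fst.trans (le_sum_agentWeight_le_outcome hθ S x (htm 0)))
    (h.right_fst.trans (le_sum_agentWeight_outcome_le hθ S x (htm 0)))
    (h.left_snd.trans (le_sum_agentWeight_le_outcome hθ S x (htm 1)))
    (h.right_snd.trans (le_sum_agentWeight_outcome_le hθ S x (htm 1)))
  rw [SC_sumCost_eq_sum_weightedDist, SC_sumCost_eq_sum_weightedDist, Fin.sum_univ_two,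
    Fin.sum_univ_two]
  linarith [hratio (y 0), hratio (y 1)]

/-- The quantile used by the `(1 + √2)`-approximation with `m` groups. The symmetric choice, the
median with ranks `⌈(√2 - 1) * m⌉` and `⌈(2 - √2) * m⌉`, has to be modified for `m = 3` and
`m = 5`, where these two ranks coincide. -/
def repQuantile (m : ℕ) : ℝ := if m = 3 ∨ m = 5 then 5 / 8 else 1 / 2

/-- The ranks of the two facilities that accompany `repQuantile`. -/
def facilityRank (m : ℕ) : Fin 2 → ℕ :=
  if m = 3 ∨ m = 5 then ![m / 2, m / 2 + 1] else ![⌈(√2 - 1) * m⌉₊, ⌈(2 - √2) * m⌉₊]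

theorem sqrt_two_mem_Ioo : √2 ∈ Set.Ioo 1.414 1.4143 :=
  ⟨Real.lt_sqrt_of_sq_lt (by norm_num), (Real.sqrt_lt' (by norm_num)).2 (by norm_num)⟩

theorem repQuantile_mem_Ioc (m : ℕ) : repQuantile m ∈ Set.Ioc 0 1 := by
  unfold repQuantile
  split_ifs <;> norm_num

theorem facilityRank_mem_Icc {m : ℕ} (hm : 2 ≤ m) (ℓ : Fin 2) : facilityRank m ℓ ∈ Icc 1 m := by
  obtain ⟨hlo, hhi⟩ := sqrt_two_mem_Ioo
  unfold facilityRank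
  split_ifs with h
  · rcases h with rfl | rfl <;> fin_cases ℓ <;> decide
  · fin_cases ℓ <;> exact ceil_mul_mem_Icc ⟨by linarith, by linarith⟩ (by omega)

theorem ceil_sqrt_two_sub_one_mul_lt {m : ℕ} (hm : 2 ≤ m) (h3 : m ≠ 3) (h5 : m ≠ 5) :
    ⌈(√2 - 1) * m⌉₊ < ⌈(2 - √2) * m⌉₊ := by
  obtain ⟨hlo, hhi⟩ := sqrt_two_mem_Ioo
  suffices h : ∃ c : ℕ, (√2 - 1) * m ≤ c ∧ c < (2 - √2) * m by
    obtain ⟨c, hle, hlt⟩ := h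
    exact (Nat.ceil_le.2 hle).trans_lt (Nat.lt_ceil.2 hlt)
  rcases le_or_gt 6 m with h6 | h6
  · -- the two reals differ by `(3 - 2 * √2) * m`, which exceeds `1` from `m = 6` on
    have h6' : (6 : ℝ) ≤ m := by exact_mod_cast h6
    exact ⟨⌈(√2 - 1) * m⌉₊, Nat.le_ceil _,
      (Nat.ceil_lt_add_one (by nlinarith)).trans (by nlinarith)⟩
  · obtain rfl | rfl : m = 2 ∨ m = 4 := by omega
    · exact ⟨1, by norm_num; linarith, by norm_num; linarith⟩
    · exact ⟨2, by norm_num; linarith, by norm_num; linarith⟩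

theorem facilityRank_strictMono {m : ℕ} (hm : 2 ≤ m) : StrictMono (facilityRank m) := by
  refine Fin.strictMono_iff_lt_succ.2 fun ℓ => ?_
  obtain rfl := Subsingleton.elim ℓ 0
  unfold facilityRank
  split_ifs with h
  · simp
  · rw [not_or] at h
    simpa using ceil_sqrt_two_sub_one_mul_lt hm h.1 h.2

theorem isBalanced_repQuantile_facilityRank {m : ℕ} (hm : 2 ≤ m) :
    IsBalanced m (repQuantile m) (facilityRank m) := by
  obtain ⟨hlo, hhi⟩ := sqrt_two_mem_Ioo
  by_cases h : m = 3 ∨ m = 5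
  · rcases h with rfl | rfl <;> constructor <;> norm_num [repQuantile, facilityRank] <;> linarith
  · have hm0 : (0 : ℝ) < m := by positivity
    have hfst_le := Nat.le_ceil ((√2 - 1) * (m : ℝ))
    have hfst_lt := Nat.ceil_lt_add_one (a := (√2 - 1) * (m : ℝ)) (by nlinarith)
    have hsnd_le := Nat.le_ceil ((2 - √2) * (m : ℝ))
    have hsnd_lt := Nat.ceil_lt_add_one (a := (2 - √2) * (m : ℝ)) (by nlinarith)
    constructor <;> simp only [repQuantile, facilityRank, if_neg h, Matrix.cons_val_zero,
      Matrix.cons_val_one] <;> rw [le_div_iff₀ hm0] <;> linarith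

end Ratio

theorem stmt3_general :
    ∃ M : TwoPhase 2, M.Valid ∧ Strategyproof (sumCost 2) M ∧
      ∀ (m : ℕ) (S : FLSetting 2 m) (x : Fin S.n → ℝ) (y : Fin 2 → ℝ),
        SC (sumCost 2) S x (outcome M S x) ≤ (1 + √2) * SC (sumCost 2) S x y := by
  have hθ := repQuantile_mem_Ioc
  have htm := fun m => facilityRank_mem_Icc (m := m)
  have ht := fun m => facilityRank_strictMono (m := m)
  exact ⟨quantileMech repQuantile facilityRank, quantileMech_valid hθ ht htm,
    quantileMech_strategyproof hθ htm, fun m S => SC_outcome_quantileMech_le (hθ m)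
      (ht m S.hmk).monotone (htm m S.hmk) (isBalanced_repQuantile_facilityRank S.hmk) S⟩

/-- In the sum-variant with two facilities there is a strategyproof two-phase mechanism
with approximation ratio at most `1 + √2`. -/
theorem stmt3 :
    ∃ M : TwoPhase 2, M.Valid ∧ Strategyproof (sumCost 2) M ∧
      ∀ (m : ℕ) (S : FLSetting 2 m) (x : Fin S.n → ℝ) (y : Fin 2 → ℝ), Feasible S x y →
        SC (sumCost 2) S x (outcome M S x) ≤ (1 + Real.sqrt 2) * SC (sumCost 2) S x y := by
  obtain ⟨M, hvalid, hsp, hratio⟩ := stmt3_general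
  exact ⟨M, hvalid, hsp, fun m S x y _ => hratio m S x y⟩

end
end

section
/- In the sum-variant with k = 2 facilities, for every two-phase mechanism (not necessarily strategyproof) and every ε > 0, there exists an instance on which the social cost of the mechanism's output is at least (1 + √2 − ε) times the minimum social cost over all feasible solutions. -/
open Finset

noncomputable section

/-
Put all agents at two points `p` and `r` and write `σ = 1/√k`, `c = 1/(2(1 + σ))`. A group split
evenly between the points is represented at one of them, say `p`, so among groups of `N` agents
some `s ≤ N/2` is a switch: `s` agents at `p` have their representative at `p`, but `s - 1` agents
at `p` have it at `r`. Let `a` of the `N` groups be represented at `p` and the others at `r`; the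
mechanism cannot tell apart the following two instances.

* The groups at `p` have only `s` agents there and the groups at `r` are unanimous: opening
  everything at `p` costs `(1 - P)/P` times the optimum, where `P = (a/N)(s/N)`.
* The groups at `p` are unanimous and the groups at `r` have `s - 1` agents at `p`: opening some
  facility at `r` costs at least `(1 + (k - 2)Q)/(kQ)` times the optimum, where
  `Q ≈ (1 - a/N)(1 - s/N)`.

Choosing `a ≤ N` as large as `P ≤ c` allows gives `Q ≤ 1/2 - c = σc` up to `O(1/N)`, because
`s/N ≤ 1/2 ≤ 2c`, and both ratios become `1 + 2σ`.
-/

/-! ### Instances as families of multisets -/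

/-- The average of `f` over a group of agents with multiset of positions `A`
(`0` for the empty group, by `x / 0 = 0`). -/
def groupMean (A : Multiset ℝ) (f : ℝ → ℝ) : ℝ := (A.map f).sum / Multiset.card A

lemma groupMean_replicate {n : ℕ} (hn : n ≠ 0) (p : ℝ) (f : ℝ → ℝ) :
    groupMean (Multiset.replicate n p) f = f p := by
  simp [groupMean, hn]

section Instances

variable {k m a b : ℕ}

lemma SC_eq_sum_groupMean (cost : ℝ → (Fin k → ℝ) → ℝ) (S : FLSetting k m) (x : Fin S.n → ℝ)
    (y : Fin k → ℝ) :
    SC cost S x y = (∑ j, groupMean (groupMS S x j) fun z => cost z y) / m := by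
  simp only [SC, groupMean, groupMS, groupSize, Multiset.map_map, Multiset.card_map,
    one_div_mul_eq_div]
  rfl

lemma exists_groupMS_eq (hk : k ≤ m) (G : Fin m → Multiset ℝ) (hG : ∀ j, G j ≠ 0)
    (hn : 2 ≤ ∑ j, Multiset.card (G j)) :
    ∃ (S : FLSetting k m) (x : Fin S.n → ℝ), groupMS S x = G := by
  obtain ⟨L, rfl⟩ : ∃ L : Fin m → List ℝ, G = fun j => (L j : Multiset ℝ) :=
    ⟨fun j => (G j).toList, by simp⟩
  let e : (Σ j, Fin (L j).length) ≃ Fin (∑ j, (L j).length) := finSigmaFinEquiv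
  refine ⟨⟨_, hn, hk, fun i => (e.symm i).1, fun j => ?_⟩,
    fun i => (L (e.symm i).1).get (e.symm i).2, ?_⟩
  · exact ⟨e ⟨j, ⟨0, Multiset.card_pos.2 (hG j)⟩⟩, by simp⟩
  · funext j
    have hfiber : (univ.filter fun i => (e.symm i).1 = j) =
        univ.map ((Function.Embedding.sigmaMk j).trans e.toEmbedding) := by
      ext i
      obtain ⟨⟨g, b⟩, rfl⟩ := e.surjective i
      simp only [mem_filter, mem_univ, true_and, mem_map, Equiv.symm_apply_apply]
      constructor
      · rintro rfl
        exact ⟨b, rfl⟩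
      · rintro ⟨b', hb'⟩
        exact (congrArg Sigma.fst (e.injective hb')).symm
    calc (univ.filter fun i => (e.symm i).1 = j).val.map
          (fun i => (L (e.symm i).1).get (e.symm i).2)
        = univ.val.map (L j).get := by
          rw [hfiber, Finset.map_val, Multiset.map_map]
          exact Multiset.map_congr rfl fun b _ =>
            congrArg (fun u : Σ j, Fin (L j).length => (L u.1).get u.2) (e.symm_apply_apply ⟨j, b⟩)
      _ = (L j : Multiset ℝ) := by rw [Fin.univ_val_map, List.ofFn_get]

lemma feasible_const_of_le_count {S : FLSetting k m} {x : Fin S.n → ℝ} {w : ℝ} {j : Fin m}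
    (h : k ≤ (groupMS S x j).count w) : Feasible S x fun _ => w := by
  rw [groupMS, Multiset.count_map, ← filter_val, card_val] at h
  refine ⟨orderEmbOfCardLe _ h, (orderEmbOfCardLe _ h).injective, fun l => ?_⟩
  exact (mem_filter.1 (orderEmbOfCardLe_mem _ h l)).2

lemma SC_of_groupMS_eq_append {S : FLSetting k (a + b)} {x : Fin S.n → ℝ} {A B : Multiset ℝ}
    (hG : groupMS S x = Fin.append (fun _ => A) fun _ => B) (cost : ℝ → (Fin k → ℝ) → ℝ)
    (y : Fin k → ℝ) :
    SC cost S x y =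
      (a * groupMean A (fun z => cost z y) + b * groupMean B fun z => cost z y) / (a + b) := by
  simp [SC_eq_sum_groupMean, hG, Fin.sum_univ_add]

lemma repsMS_of_groupMS_eq_append {M : TwoPhase k} {S : FLSetting k (a + b)} {x : Fin S.n → ℝ}
    {A B : Multiset ℝ} (hG : groupMS S x = Fin.append (fun _ => A) fun _ => B) :
    repsMS M S x =
      Multiset.replicate a (M.rep (a + b) A) + Multiset.replicate b (M.rep (a + b) B) := by
  have hmap : repsMS M S x = (univ.val.map (groupMS S x)).map (M.rep (a + b)) :=
    (Multiset.map_map _ _ _).symm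
  rw [hmap, hG, Fin.univ_val_map, List.ofFn_fin_append]
  simp [← Multiset.coe_replicate]

end Instances

section Valid

variable {k m : ℕ} {M : TwoPhase k}

lemma TwoPhase.Valid.rep_replicate (hM : M.Valid) {n : ℕ} (hn : n ≠ 0) (p : ℝ) :
    M.rep m (Multiset.replicate n p) = p :=
  Multiset.eq_of_mem_replicate
    (hM.1 m _ (Multiset.card_pos.1 (by rwa [Multiset.card_replicate, Nat.pos_iff_ne_zero])))

lemma TwoPhase.Valid.sel_mem (hM : M.Valid) (hk : k ≤ m) {R : Multiset ℝ}
    (hR : Multiset.card R = m) (l : Fin k) : M.sel m R l ∈ R :=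
  Multiset.mem_of_le (hM.2 m R hR hk) (by simp)

end Valid

/-! ### Two-point groups -/

/-- The multiset of positions of a group with `s` agents at `p` and `t` agents at `r`. -/
def twoPoint (p r : ℝ) (s t : ℕ) : Multiset ℝ := Multiset.replicate s p + Multiset.replicate t r

section TwoPoint

variable {p r : ℝ}

lemma twoPoint_comm (p r : ℝ) (s t : ℕ) : twoPoint p r s t = twoPoint r p t s :=
  add_comm _ _

lemma card_twoPoint (p r : ℝ) (s t : ℕ) : Multiset.card (twoPoint p r s t) = s + t := by
  simp [twoPoint]

lemma eq_or_eq_of_mem_twoPoint {s t : ℕ} {w : ℝ} (h : w ∈ twoPoint p r s t) : w = p ∨ w = r :=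
  (Multiset.mem_add.1 h).imp Multiset.eq_of_mem_replicate Multiset.eq_of_mem_replicate

lemma le_count_twoPoint_right (p r : ℝ) (s t : ℕ) : t ≤ (twoPoint p r s t).count r := by
  simp [twoPoint]

lemma groupMean_twoPoint (p r : ℝ) (s t : ℕ) (f : ℝ → ℝ) :
    groupMean (twoPoint p r s t) f = (s * f p + t * f r) / (s + t) := by
  simp [groupMean, twoPoint]

lemma TwoPhase.Valid.rep_twoPoint {k m s t : ℕ} {M : TwoPhase k} (hM : M.Valid)
    (hst : 0 < s + t) : M.rep m (twoPoint p r s t) = p ∨ M.rep m (twoPoint p r s t) = r :=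
  eq_or_eq_of_mem_twoPoint (hM.1 m _ (Multiset.card_pos.1 (by rwa [card_twoPoint])))

lemma TwoPhase.Valid.exists_rep_switch {k m q v : ℕ} {M : TwoPhase k} (hM : M.Valid)
    (hpr : p ≠ r) (hqv : 0 < q + v) (hq : M.rep m (twoPoint p r q v) = p) :
    ∃ s t, s + 1 + t = q + v ∧ s < q ∧
      M.rep m (twoPoint p r (s + 1) t) = p ∧ M.rep m (twoPoint p r s (t + 1)) = r := by
  induction q generalizing v with
  | zero =>
    have hr : M.rep m (twoPoint p r 0 v) = r := by
      simpa [twoPoint] using hM.rep_replicate (m := m) (n := v) (by omega) r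
    exact absurd (hq.symm.trans hr) hpr
  | succ q ih =>
    rcases hM.rep_twoPoint (m := m) (p := p) (r := r) (show 0 < q + (v + 1) by omega)
      with h | h
    · obtain ⟨s, t, hst, hs, hreps⟩ := ih (by omega) h
      exact ⟨s, t, by omega, by omega, hreps⟩
    · exact ⟨q, v, rfl, q.lt_succ_self, hq, h⟩

lemma exists_twoPoint_instance {k N a b s t : ℕ} {M : TwoPhase k} (hM : M.Valid) (hk : 0 < k)
    (hkN : k ≤ N) (hN : 2 ≤ N) (hab : a + b = N) (hst : 0 < s + t)
    (hrep : M.rep N (twoPoint p r s t) = p) (hfeas : 0 < b ∨ 0 < a ∧ k ≤ t) :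
    ∃ (S : FLSetting k N) (x : Fin S.n → ℝ), Feasible S x (fun _ => r) ∧
      repsMS M S x = twoPoint p r a b ∧
      ∀ (cost : ℝ → (Fin k → ℝ) → ℝ) (y : Fin k → ℝ), SC cost S x y =
        (a / N * (s / (s + t)) : ℝ) * cost p y + (1 - a / N * (s / (s + t)) : ℝ) * cost r y := by
  subst hab
  set G : Fin (a + b) → Multiset ℝ :=
    Fin.append (fun _ => twoPoint p r s t) fun _ => Multiset.replicate k r with hGdef
  have hG : ∀ j, G j ≠ 0 := fun j => by
    refine j.addCases (fun i => ?_) (fun i => ?_) <;>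
      simp [hGdef, ← Multiset.card_pos, card_twoPoint, hk, hst]
  have hcard : 2 ≤ ∑ j, Multiset.card (G j) :=
    calc 2 ≤ a + b := hN
      _ = ∑ _j : Fin (a + b), 1 := by simp
      _ ≤ ∑ j, Multiset.card (G j) := sum_le_sum fun j _ => Multiset.card_pos.2 (hG j)
  obtain ⟨S, x, hSx⟩ := exists_groupMS_eq hkN G hG hcard
  refine ⟨S, x, ?_, ?_, fun cost y => ?_⟩
  · rcases hfeas with hb | ⟨ha, ht⟩
    · refine feasible_const_of_le_count (j := Fin.natAdd a ⟨0, hb⟩) ?_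
      rw [hSx, hGdef, Fin.append_right, Multiset.count_replicate_self]
    · refine feasible_const_of_le_count (j := Fin.castAdd b ⟨0, ha⟩) ?_
      rw [hSx, hGdef, Fin.append_left]
      exact ht.trans (le_count_twoPoint_right p r s t)
  · rw [repsMS_of_groupMS_eq_append hSx, hrep, hM.rep_replicate hk.ne', twoPoint]
  · have hN0 : (a + b : ℝ) ≠ 0 := by norm_cast; omega
    have hst0 : (s + t : ℝ) ≠ 0 := by norm_cast; omega
    rw [SC_of_groupMS_eq_append hSx, groupMean_twoPoint, groupMean_replicate hk.ne']
    push_cast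
    field_simp
    ring

end TwoPoint

/-! ### Costs with two populated points -/

section SumCost

variable {k : ℕ} {p r P : ℝ}

lemma sumCost_const (k : ℕ) (z w : ℝ) : sumCost k z (fun _ => w) = k * |z - w| := by
  simp [sumCost]

lemma minority_mul_dist_le (hP0 : 0 ≤ P) (hP : P ≤ 1 / 2) (z : ℝ) :
    P * |p - r| ≤ P * |p - z| + (1 - P) * |r - z| :=
  calc P * |p - r| ≤ P * (|p - z| + |r - z|) := by
        rw [abs_sub_comm r z]
        exact mul_le_mul_of_nonneg_left (abs_sub_le p z r) hP0
    _ ≤ P * |p - z| + (1 - P) * |r - z| := by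
        nlinarith [abs_nonneg (r - z)]

lemma weighted_sumCost_eq_sum (y : Fin k → ℝ) :
    P * sumCost k p y + (1 - P) * sumCost k r y =
      ∑ l, (P * |p - y l| + (1 - P) * |r - y l|) := by
  rw [sumCost, sumCost, mul_sum, mul_sum, sum_add_distrib]

lemma card_mul_minority_mul_dist_le (hP0 : 0 ≤ P) (hP : P ≤ 1 / 2) (y : Fin k → ℝ) :
    k * (P * |p - r|) ≤ P * sumCost k p y + (1 - P) * sumCost k r y := by
  rw [weighted_sumCost_eq_sum]
  simpa using card_nsmul_le_sum univ _ _ fun l _ => minority_mul_dist_le hP0 hP (y l)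

lemma card_mul_minority_mul_dist_add_le (hP0 : 0 ≤ P) (hP : P ≤ 1 / 2) {y : Fin k → ℝ}
    {l : Fin k} (hl : y l = p) :
    k * (P * |p - r|) + (1 - 2 * P) * |p - r| ≤
      P * sumCost k p y + (1 - P) * sumCost k r y := by
  have hexcess := single_le_sum
    (f := fun l => P * |p - y l| + (1 - P) * |r - y l| - P * |p - r|)
    (fun l _ => sub_nonneg.2 (minority_mul_dist_le hP0 hP (y l))) (mem_univ l)
  rw [sum_sub_distrib, ← weighted_sumCost_eq_sum] at hexcess
  simp only [hl, sub_self, abs_zero, abs_sub_comm r p, sum_const, card_univ, Fintype.card_fin,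
    nsmul_eq_mul] at hexcess
  linarith

end SumCost

/-! ### The adversarial instances -/

/-- The approximation ratio of `M` is at least `ρ` already on some instance: there, its output
costs at least `ρ` times an optimal feasible solution. -/
def ApproxRatioGE {k : ℕ} (cost : ℝ → (Fin k → ℝ) → ℝ) (M : TwoPhase k) (ρ : ℝ) : Prop :=
  ∃ (m : ℕ) (S : FLSetting k m) (x : Fin S.n → ℝ) (yopt : Fin k → ℝ),
    Feasible S x yopt ∧
    (∀ y : Fin k → ℝ, Feasible S x y → SC cost S x yopt ≤ SC cost S x y) ∧
    ρ * SC cost S x yopt ≤ SC cost S x (outcome M S x)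

section Adversary

variable {k N a b s t : ℕ} {M : TwoPhase k} {p r P ρ : ℝ}

lemma approxRatioGE_of_le (hM : M.Valid) (hk : 0 < k) (hkN : k ≤ N) (hN : 2 ≤ N)
    (hab : a + b = N) (hst : 0 < s + t) (hrep : M.rep N (twoPoint p r s t) = p)
    (hfeas : 0 < b ∨ 0 < a ∧ k ≤ t) (hPdef : P = a / N * (s / (s + t))) (hP : P ≤ 1 / 2)
    (hρ : ρ * (k * (P * |p - r|)) ≤ P * sumCost k p (M.sel N (twoPoint p r a b)) +
      (1 - P) * sumCost k r (M.sel N (twoPoint p r a b))) :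
    ApproxRatioGE (sumCost k) M ρ := by
  obtain ⟨S, x, hr, hreps, hSC⟩ := exists_twoPoint_instance hM hk hkN hN hab hst hrep hfeas
  have hP0 : 0 ≤ P := hPdef ▸ by positivity
  simp only [← hPdef] at hSC
  have hopt : SC (sumCost k) S x (fun _ => r) = k * (P * |p - r|) := by
    rw [hSC, sumCost_const, sumCost_const, sub_self, abs_zero]
    ring
  refine ⟨N, S, x, fun _ => r, hr, fun y _ => ?_, ?_⟩
  · rw [hopt, hSC]
    exact card_mul_minority_mul_dist_le hP0 hP y
  · rwa [hopt, outcome, hreps, hSC]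

lemma approxRatioGE_of_forall_sel_eq (hM : M.Valid) (hk : 0 < k) (hkN : k ≤ N) (hN : 2 ≤ N)
    (hab : a + b = N) (ha : 0 < a) (hkt : k ≤ t)
    (hrep : M.rep N (twoPoint p r s t) = p) (hP : a / N * (s / (s + t)) ≤ (1 / 2 : ℝ))
    (hsel : ∀ l, M.sel N (twoPoint p r a b) l = p)
    (hρ : ρ * (a / N * (s / (s + t))) ≤ 1 - (a / N * (s / (s + t)) : ℝ)) :
    ApproxRatioGE (sumCost k) M ρ := by
  refine approxRatioGE_of_le hM hk hkN hN hab (by omega) hrep (Or.inr ⟨ha, hkt⟩) rfl hP ?_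
  rw [funext hsel, sumCost_const, sumCost_const, sub_self, abs_zero, abs_sub_comm r p]
  linarith [mul_le_mul_of_nonneg_right hρ (show 0 ≤ k * |p - r| by positivity)]

lemma approxRatioGE_of_exists_sel_eq (hM : M.Valid) (hkN : k ≤ N) (hN : 2 ≤ N)
    (hab : a + b = N) (hb : 0 < b) (hst : 0 < s + t)
    (hrep : M.rep N (twoPoint p r s t) = p) (hP : a / N * (s / (s + t)) ≤ (1 / 2 : ℝ))
    {l : Fin k} (hsel : M.sel N (twoPoint p r a b) l = p)
    (hρ : ρ * (k * (a / N * (s / (s + t)))) ≤ 1 + (k - 2) * (a / N * (s / (s + t)) : ℝ)) :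
    ApproxRatioGE (sumCost k) M ρ := by
  refine approxRatioGE_of_le hM l.pos hkN hN hab hst hrep (Or.inl hb) rfl hP ?_
  refine le_trans ?_ (card_mul_minority_mul_dist_add_le (by positivity) hP hsel)
  linarith [mul_le_mul_of_nonneg_right hρ (abs_nonneg (p - r))]

end Adversary

/-! ### Choice of the number of groups -/

lemma one_sub_div_mul_one_sub_le {c θ : ℝ} (hc : 1 / 4 ≤ c) (hθ0 : 0 < θ) (hθ : θ ≤ 1 / 2) :
    (1 - c / θ) * (1 - θ) ≤ 1 / 2 - c := by
  have hfactor : (1 - c / θ) * (1 - θ) = 1 / 2 - c - (1 / 2 - θ) * (2 * c - θ) / θ := by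
    field_simp
    ring
  rw [hfactor]
  exact sub_le_self _ (div_nonneg (mul_nonneg (by linarith) (by linarith)) hθ0.le)

lemma exists_group_count {c θ : ℝ} (hc : 1 / 4 ≤ c) (hc' : c ≤ 1 / 2) (hθ0 : 0 < θ)
    (hθ : θ ≤ 1 / 2) {N : ℕ} (hN : 2 ≤ N) :
    ∃ a b : ℕ, a + b = N ∧ 0 < a ∧ a / N * θ ≤ c ∧
      b / N * (1 - θ + 1 / N) ≤ 1 / 2 - c + 2 / N := by
  have hN2 : (2 : ℝ) ≤ N := by exact_mod_cast hN
  rcases le_total 1 (c / θ) with hw | hw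
  · refine ⟨N, 0, add_zero N, by omega, ?_, ?_⟩
    · rw [div_self (by positivity), one_mul]
      exact (one_le_div hθ0).1 hw
    · have : (0 : ℝ) ≤ 2 / N := by positivity
      rw [Nat.cast_zero, zero_div, zero_mul]
      linarith
  · have hwN : c / θ * N ≤ N := mul_le_of_le_one_left (by positivity) hw
    have ha_le : (⌊c / θ * N⌋₊ : ℝ) ≤ c / θ * N := Nat.floor_le (by positivity)
    have ha_pos : 0 < ⌊c / θ * N⌋₊ := by
      have : 1 / 2 ≤ c / θ := (le_div_iff₀ hθ0).2 (by linarith)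
      exact Nat.floor_pos.2 (by nlinarith)
    obtain ⟨b, hb⟩ := Nat.exists_eq_add_of_le (Nat.floor_le_of_le hwN)
    refine ⟨_, b, hb.symm, ha_pos, ?_, ?_⟩
    · calc (⌊c / θ * N⌋₊ : ℝ) / N * θ ≤ c / θ * θ :=
            mul_le_mul_of_nonneg_right ((div_le_iff₀ (by positivity)).2 ha_le) hθ0.le
        _ = c := div_mul_cancel₀ c hθ0.ne'
    · have hbN : (b : ℝ) / N ≤ 1 - c / θ + 1 / N := by
        have hb' : (N : ℝ) = ⌊c / θ * N⌋₊ + b := by exact_mod_cast hb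
        have := Nat.lt_floor_add_one (c / θ * N)
        rw [div_le_iff₀ (by positivity), add_mul, div_mul_cancel₀ _ (by positivity)]
        linarith
      have hbN1 : (b : ℝ) / N ≤ 1 :=
        div_le_one_of_le₀ (by exact_mod_cast hb ▸ Nat.le_add_left b _) (by positivity)
      have : (0 : ℝ) ≤ 1 / N := by positivity
      calc (b : ℝ) / N * (1 - θ + 1 / N) = b / N * (1 - θ) + b / N * (1 / N) := mul_add _ _ _
        _ ≤ (1 - c / θ + 1 / N) * (1 - θ) + 1 * (1 / N) := by
          gcongr
          linarith
        _ = (1 - c / θ) * (1 - θ) + 1 / N * (1 - θ) + 1 / N := by ring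
        _ ≤ 1 / 2 - c + 1 / N * 1 + 1 / N := by
          gcongr
          · exact one_sub_div_mul_one_sub_le hc hθ0 hθ
          · linarith
        _ = 1 / 2 - c + 2 / N := by ring

lemma ratio_mul_le_one_sub {σ ε P : ℝ} (hσ : 0 < σ) (hε : 0 ≤ ε) (hP0 : 0 ≤ P)
    (hP : P ≤ 1 / (2 * (1 + σ))) : (1 + 2 * σ - ε) * P ≤ 1 - P := by
  rw [le_div_iff₀ (by positivity)] at hP
  nlinarith [mul_nonneg hε hP0]

lemma ratio_mul_card_mul_le {k σ ε δ Q : ℝ} (hσ : 0 < σ) (hk : k * σ ^ 2 = 1) (hε : 0 ≤ ε)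
    (hδ : 4 * (1 + σ) ^ 2 * δ ≤ ε) (hQ0 : 0 ≤ Q)
    (hQ : Q ≤ 1 / 2 - 1 / (2 * (1 + σ)) + δ) :
    (1 + 2 * σ - ε) * (k * Q) ≤ 1 + (k - 2) * Q := by
  set τ := 2 * (1 + σ) with hτ
  have hτ0 : 0 < τ := by positivity
  have hk0 : 0 < k := pos_of_mul_pos_left (hk ▸ one_pos) (sq_nonneg σ)
  have hσk : 0 < k * σ := mul_pos hk0 hσ
  have hcoeff : 2 * σ * k + 2 = k * σ * τ := by rw [hτ]; linear_combination -2 * hk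
  have hlimit : 1 / 2 - 1 / τ = σ / τ := by rw [hτ]; field_simp; ring
  have hτδ : τ * δ ≤ ε / τ := (le_div_iff₀ hτ0).2 (by rw [hτ]; linarith)
  have hone : k * σ * τ * (σ / τ) = 1 := by field_simp; linarith
  suffices k * σ * τ * Q ≤ 1 + ε * k * Q by linear_combination this + Q * hcoeff
  rw [hlimit] at hQ
  rcases le_total Q (σ / τ) with hQσ | hQσ
  · calc k * σ * τ * Q ≤ k * σ * τ * (σ / τ) := by gcongr
      _ ≤ 1 + ε * k * Q := by rw [hone]; exact le_add_of_nonneg_right (by positivity)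
  · calc k * σ * τ * Q ≤ k * σ * τ * (σ / τ + δ) := by gcongr
      _ = 1 + k * σ * (τ * δ) := by rw [mul_add, hone]; ring
      _ ≤ 1 + k * σ * (ε / τ) := by gcongr
      _ = 1 + ε * k * (σ / τ) := by ring
      _ ≤ 1 + ε * k * Q := by gcongr

/-! ### The lower bound -/

lemma approxRatioGE_of_rep_switch {k N a b s t : ℕ} {M : TwoPhase k} (hM : M.Valid)
    {p r σ ε δ : ℝ} (hσ : 0 < σ) (hkσ : k * σ ^ 2 = 1) (hε : 0 ≤ ε) (hab : a + b = N)
    (ha : 0 < a) (hst : s + 1 + t = N) (hkt : k ≤ t)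
    (hrep_p : M.rep N (twoPoint p r (s + 1) t) = p)
    (hrep_r : M.rep N (twoPoint p r s (t + 1)) = r)
    (hP : (a / N * ((s + 1) / N) : ℝ) ≤ 1 / (2 * (1 + σ)))
    (hQ : (b / N * ((t + 1) / N) : ℝ) ≤ 1 / 2 - 1 / (2 * (1 + σ)) + δ)
    (hδ : δ ≤ 1 / (2 * (1 + σ))) (hδε : 4 * (1 + σ) ^ 2 * δ ≤ ε) :
    ApproxRatioGE (sumCost k) M (1 + 2 * σ - ε) := by
  have hk : 0 < k := Nat.pos_of_ne_zero (by rintro rfl; simp at hkσ)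
  have hkN : k ≤ N := by omega
  have hN : 2 ≤ N := by omega
  by_cases hsel : ∀ l, M.sel N (twoPoint p r a b) l = p
  · have hfrac : (((s + 1 : ℕ) : ℝ) / ((s + 1 : ℕ) + t)) = (s + 1) / N := by
      rw [← hst]
      push_cast
      rfl
    have hc : 1 / (2 * (1 + σ)) ≤ 1 / 2 := one_div_le_one_div_of_le two_pos (by linarith)
    refine approxRatioGE_of_forall_sel_eq hM hk hkN hN hab ha hkt hrep_p ?_ hsel ?_ <;> rw [hfrac]
    · exact hP.trans hc
    · exact ratio_mul_le_one_sub hσ hε (by positivity) hP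
  · push Not at hsel
    obtain ⟨l, hl⟩ := hsel
    have hl_r : M.sel N (twoPoint p r a b) l = r :=
      (eq_or_eq_of_mem_twoPoint
        (hM.sel_mem hkN (by rw [card_twoPoint, hab]) l)).resolve_left hl
    have hfrac : (((t + 1 : ℕ) : ℝ) / ((t + 1 : ℕ) + s)) = (t + 1) / N := by
      rw [← hst]
      push_cast
      ring
    -- the second instance is the first one with `p` and `r` exchanged
    rw [twoPoint_comm] at hrep_r hl_r
    refine approxRatioGE_of_exists_sel_eq hM hkN hN (by omega) ha (by omega) hrep_r ?_ hl_r ?_ <;>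
      rw [hfrac]
    · linarith
    · exact ratio_mul_card_mul_le hσ hkσ hε hδε (by positivity) hQ

lemma approxRatioGE_of_rep_balanced {k q : ℕ} {M : TwoPhase k} (hM : M.Valid) {p r ε : ℝ}
    (hpr : p ≠ r) (hk : 0 < k) (hε : 0 ≤ ε) (hkq : k ≤ q) (hq4 : 4 ≤ q) (hqε : 16 ≤ ε * q)
    (hrep : M.rep (2 * q) (twoPoint p r q q) = p) :
    ApproxRatioGE (sumCost k) M (1 + 2 * (1 / √k) - ε) := by
  have hsqrt : 1 ≤ √k := Real.one_le_sqrt.2 (by exact_mod_cast hk)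
  have hkσ : k * (1 / √k) ^ 2 = 1 := by
    rw [div_pow, Real.sq_sqrt k.cast_nonneg]
    field_simp
  have hσ0 : 0 < 1 / √k := by positivity
  have hσ1 : 1 / √k ≤ 1 := div_le_one_of_le₀ hsqrt (by positivity)
  generalize 1 / √k = σ at hσ0 hσ1 hkσ ⊢
  have hc4 : 1 / 4 ≤ 1 / (2 * (1 + σ)) := one_div_le_one_div_of_le (by positivity) (by linarith)
  have hc2 : 1 / (2 * (1 + σ)) ≤ 1 / 2 := one_div_le_one_div_of_le two_pos (by linarith)
  obtain ⟨s, t, hst, hsq, hrep_p, hrep_r⟩ := hM.exists_rep_switch hpr (by omega) hrep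
  rw [← two_mul] at hst
  have hq4' : (4 : ℝ) ≤ q := by exact_mod_cast hq4
  have hθ : (s + 1 : ℝ) / (2 * q : ℕ) ≤ 1 / 2 := by
    have hsq' : (s + 1 : ℝ) ≤ q := by exact_mod_cast hsq
    rw [Nat.cast_mul, Nat.cast_ofNat, div_le_iff₀ (by positivity)]
    linarith
  have hθ' : 1 - (s + 1 : ℝ) / (2 * q : ℕ) + 1 / (2 * q : ℕ) = (t + 1) / (2 * q : ℕ) := by
    rw [← hst]
    push_cast
    field_simp
    ring
  have hδ : (2 : ℝ) / (2 * q : ℕ) = 1 / q := by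
    push_cast
    field_simp
  obtain ⟨a, b, hab, ha, hP, hQ⟩ :=
    exists_group_count (N := 2 * q) hc4 hc2 (by positivity) hθ (by omega)
  rw [hθ', hδ] at hQ
  refine approxRatioGE_of_rep_switch hM hσ0 hkσ hε hab ha hst (by omega) hrep_p hrep_r hP hQ ?_ ?_
  · exact (one_div_le_one_div_of_le four_pos hq4').trans hc4
  · have : (1 + σ) ^ 2 ≤ 2 ^ 2 := by gcongr; linarith
    rw [mul_one_div, div_le_iff₀ (by positivity)]
    linarith

theorem stmt7_general {k : ℕ} (hk : 0 < k) (M : TwoPhase k) (hM : M.Valid) (ε : ℝ) (hε : 0 < ε) :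
    ApproxRatioGE (sumCost k) M (1 + 2 / √k - ε) := by
  obtain ⟨q, hq⟩ := exists_nat_ge (max (max (k : ℝ) 4) (16 / ε))
  have hkq : k ≤ q := by exact_mod_cast (le_max_left _ _).trans ((le_max_left _ _).trans hq)
  have hq4 : 4 ≤ q := by exact_mod_cast (le_max_right _ _).trans ((le_max_left _ _).trans hq)
  have hqε : 16 ≤ ε * q := (div_le_iff₀' hε).1 ((le_max_right _ _).trans hq)
  rw [← mul_one_div 2 √k]
  rcases hM.rep_twoPoint (m := 2 * q) (p := 0) (r := 1) (show 0 < q + q by omega) with h | h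
  · exact approxRatioGE_of_rep_balanced hM zero_ne_one hk hε.le hkq hq4 hqε h
  · rw [twoPoint_comm] at h
    exact approxRatioGE_of_rep_balanced hM one_ne_zero hk hε.le hkq hq4 hqε h

/-- In the sum-variant with two facilities, for every (valid) two-phase mechanism and
every `ε > 0`, there is an instance on which the output's social cost is at least
`(1 + √2 − ε)` times the minimum social cost over all feasible solutions. -/
theorem stmt7 (M : TwoPhase 2) (hM : M.Valid) (ε : ℝ) (hε : 0 < ε) :
    ∃ (m : ℕ) (S : FLSetting 2 m) (x : Fin S.n → ℝ) (yopt : Fin 2 → ℝ),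
      Feasible S x yopt ∧
      (∀ y : Fin 2 → ℝ, Feasible S x y → SC (sumCost 2) S x yopt ≤ SC (sumCost 2) S x y) ∧
      (1 + Real.sqrt 2 - ε) * SC (sumCost 2) S x yopt
        ≤ SC (sumCost 2) S x (outcome M S x) := by
  have h := stmt7_general two_pos M hM ε hε
  rwa [Nat.cast_ofNat, Real.div_sqrt] at h

end
end
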